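/- Let K ⊆ ℝ² be a Minkowski centered convex body with s(K) > φ and write s = s(K). Then there exists a well-spread triple p¹, p², p³ of asymmetry points of K such that K' := conv((K ∩ (−K)) ∪ {−s·p¹, −s·p², −s·p³}) is Minkowski centered and satisfies: (i) s(K') = s(K); (ii) τ(K') ≥ τ(K); (iii) there exists p ∈ bd(K' ∩ (−K')) ∩ τ(K')·bd((K' − K')/2) with p ∈ bd(K') ∩ bd(−K'). -/

import Mathlib

open scoped Pointwise RealInnerProductSpace
open Set

noncomputable section

abbrev E2 := EuclideanSpace ℝ (Fin 2)

/-- A convex body: compact convex set with nonempty interior. -/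
def IsConvexBody (K : Set E2) : Prop :=
  Convex ℝ K ∧ IsCompact K ∧ (interior K).Nonempty

/-- circumradius `R(K,C)` -/
def circum (K C : Set E2) : ℝ :=
  sInf {ρ : ℝ | 0 < ρ ∧ ∃ t : E2, K ⊆ ρ • C + {t}}

/-- inradius `r(K,C)` -/
def inrad (K C : Set E2) : ℝ :=
  sSup {ρ : ℝ | 0 < ρ ∧ ∃ t : E2, ρ • C + {t} ⊆ K}

/-- width `w(K,C)` -/
def widthB (K C : Set E2) : ℝ := 2 * inrad (K - K) (C - C)

/-- diameter `D(K,C)` -/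
def diamB (K C : Set E2) : ℝ := 2 * circum (K - K) (C - C)

/-- Minkowski asymmetry `s(K)` -/
def minkAsym (K : Set E2) : ℝ :=
  sInf {ρ : ℝ | 0 < ρ ∧ ∃ c : E2, K - {c} ⊆ ρ • ({c} - K)}

/-- `K` is Minkowski centered -/
def MinkCentered (K : Set E2) : Prop := K ⊆ minkAsym K • (-K)

/-- `τ(K)`: smallest `ρ > 0` with `K ∩ (-K) ⊆ ρ • ((K-K)/2)` -/
def tauB (K : Set E2) : ℝ :=
  sInf {ρ : ℝ | 0 < ρ ∧ K ∩ (-K) ⊆ ρ • ((2:ℝ)⁻¹ • (K - K))}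

/-- golden ratio -/
def phiR : ℝ := (1 + Real.sqrt 5) / 2

def cExpr2 (s : ℝ) : ℝ :=
  (s^2+1)^2 / ((s^2-1) * (s^2+2*s-1+2*Real.sqrt (s*(s^2-1))))

def cExpr3 (s : ℝ) : ℝ := 2*(s^2-2*s-1) / ((s-3)*(s+1))

/-- `ŝ`: the unique `s ∈ (φ,2)` where the two expressions agree. -/
def sHat : ℝ := sInf {s : ℝ | phiR < s ∧ s < 2 ∧ cExpr2 s = cExpr3 s}

def cFun (s : ℝ) : ℝ :=
  if s ≤ phiR then 1 else if s ≤ sHat then cExpr2 s else cExpr3 s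

/-- polar body -/
def polarBody (K : Set E2) : Set E2 := {y | ∀ x ∈ K, (inner ℝ x y : ℝ) ≤ 1}

/-- `γ(K)` -/
def gammaB (K : Set E2) : ℝ :=
  sInf {ρ : ℝ | 0 < ρ ∧
    polarBody ((2:ℝ)⁻¹ • (polarBody K - polarBody K)) ⊆ ρ • convexHull ℝ (K ∪ -K)}

/-- positive hull of two points -/
def posHull2 (a b : E2) : Set E2 := {x | ∃ α β : ℝ, 0 ≤ α ∧ 0 ≤ β ∧ x = α • a + β • b}

/-- asymmetry point of `K`: a point of `bd(K) ∩ bd(−(1/s(K))·K)` -/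
def IsAsymPoint (K : Set E2) (p : E2) : Prop :=
  p ∈ frontier K ∧ p ∈ frontier ((-(minkAsym K)⁻¹) • K)

/-- a well-spread triple of asymmetry points -/
def WellSpread (K : Set E2) (p1 p2 p3 : E2) : Prop :=
  IsAsymPoint K p1 ∧ IsAsymPoint K p2 ∧ IsAsymPoint K p3 ∧
  ∃ a1 a2 a3 : E2, a1 ≠ 0 ∧ a2 ≠ 0 ∧ a3 ≠ 0 ∧
    (∀ x ∈ K, (inner ℝ a1 x : ℝ) ≤ inner ℝ a1 p1) ∧
    (∀ x ∈ K, (inner ℝ a2 x : ℝ) ≤ inner ℝ a2 p2) ∧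
    (∀ x ∈ K, (inner ℝ a3 x : ℝ) ≤ inner ℝ a3 p3) ∧
    (0:E2) ∈ interior (convexHull ℝ {p1, p2, p3}) ∧
    (0:E2) ∈ convexHull ℝ {a1, a2, a3}

/-- two points of `bd(K) ∩ bd(-K)` are consecutive -/
def Consecutive (K : Set E2) (z1 z2 : E2) : Prop :=
  ¬ ∃ z, z ∈ frontier K ∩ frontier (-K) ∧ z ∈ interior (posHull2 z1 z2)

/-- point of the plane from coordinates -/
def pt (x y : ℝ) : E2 := (WithLp.equiv 2 (Fin 2 → ℝ)).symm ![x, y]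

/-- the golden house -/
def goldenHouse : Set E2 :=
  convexHull ℝ {pt 1 0, pt (-1) 0, pt 1 (-1), pt (-1) (-1), pt 0 phiR}

/-!
Let `s` be the Minkowski asymmetry of `K`. Optimality of the inclusion `-s⁻¹ • K ⊆ K` and
Carathéodory's theorem give three touching points `p i` with outer normals `l i` of `K` balanced
around `0`. For `s > φ` one has `⟪l j, p i⟫ < 0` whenever `i ≠ j`, hence `0` is interior to the
triangle of the `p i`. The body `K'` has the same symmetric core `K ∩ -K` and the same touching
points as `K`, while its difference body is smaller; this gives (i) and (ii).

For (iii), let `τ(K')` be attained at `q ∈ K' ∩ -K'`, and suppose `-q` is interior to `K'`. A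
supporting line of `(K' - K') / 2` in the direction of `q` then supports `K'` at `q`. Write
`q = α • p i - γ • p j` and slide `q` towards `-s • p j` along `bd K'` until it meets `bd (-K')`.
A supporting line at the new point has turned away from `p i`, and since `K'` is generated by its
core and the `-s • p m`, the extent of `K'` opposite to it is controlled by `p i` and has not
grown. Hence `τ(K')` is attained at the new point as well.
-/

section ConvexHull

variable {E ι : Type*} [AddCommGroup E] [Module ℝ E] [Fintype ι]

lemma mem_convexHull_range_iff_exists_stdSimplex {z : ι → E} {x : E} :
    x ∈ convexHull ℝ (range z) ↔ ∃ w ∈ stdSimplex ℝ ι, ∑ i, w i • z i = x := by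
  classical
  have hrange : range z = Fintype.linearCombination ℝ z '' range fun i => Pi.single i (1 : ℝ) := by
    simp only [← range_comp, Function.comp_def, Fintype.linearCombination_apply_single, one_smul]
  rw [hrange, ← LinearMap.image_convexHull, convexHull_rangle_single_eq_stdSimplex]
  simp only [mem_image, Fintype.linearCombination_apply]

lemma exists_mem_convexHull_range_of_finrank_lt_card [FiniteDimensional ℝ E]
    (hcard : Module.finrank ℝ E < Fintype.card ι) {N : Set E} {x : E}
    (hx : x ∈ convexHull ℝ N) :
    ∃ z : ι → E, (∀ i, z i ∈ N) ∧ x ∈ convexHull ℝ (range z) := by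
  rw [convexHull_eq_union] at hx
  simp only [mem_iUnion] at hx
  obtain ⟨t, htN, hind, hxt⟩ := hx
  have hle : Fintype.card t ≤ Fintype.card ι := by
    have := hind.card_le_finrank_succ
    have := Submodule.finrank_le (vectorSpan ℝ (range ((↑) : t → E)))
    lia
  have : Nonempty t := by
    obtain ⟨y, hy⟩ := convexHull_nonempty_iff.1 ⟨x, hxt⟩
    exact ⟨⟨y, hy⟩⟩
  obtain ⟨e⟩ := Function.Embedding.nonempty_of_card_le hle
  let g : ι → t := Function.invFun e
  refine ⟨fun i => g i, fun i => htN (g i).2, ?_⟩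
  have hrange : range (fun i => (g i : E)) = t :=
    ((Function.invFun_surjective e.injective).range_comp ((↑) : t → E)).trans
      Subtype.range_coe
  rwa [hrange]

end ConvexHull

lemma isCompact_convexHull {E : Type*} [NormedAddCommGroup E] [NormedSpace ℝ E]
    [FiniteDimensional ℝ E] {N : Set E} (hN : IsCompact N) : IsCompact (convexHull ℝ N) := by
  let ι := Fin (Module.finrank ℝ E + 1)
  have himage : convexHull ℝ N = (fun q : (ι → ℝ) × (ι → E) => ∑ i, q.1 i • q.2 i) ''
      (stdSimplex ℝ ι ×ˢ univ.pi fun _ => N) := by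
    refine Subset.antisymm (fun x hx => ?_) ?_
    · obtain ⟨z, hzN, hxz⟩ :=
        exists_mem_convexHull_range_of_finrank_lt_card (ι := ι) (by simp [ι]) hx
      obtain ⟨w, hw, rfl⟩ := mem_convexHull_range_iff_exists_stdSimplex.1 hxz
      exact ⟨(w, z), ⟨hw, fun i _ => hzN i⟩, rfl⟩
    · rintro _ ⟨⟨w, z⟩, ⟨hw, hz⟩, rfl⟩
      exact convexHull_mono (range_subset_iff.2 fun i => hz i trivial)
        (mem_convexHull_range_iff_exists_stdSimplex.2 ⟨w, hw, rfl⟩)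
  rw [himage]
  exact ((isCompact_stdSimplex ℝ ι).prod (isCompact_univ_pi fun _ => hN)).image (by fun_prop)

section Supporting

variable {E : Type*} [NormedAddCommGroup E] [InnerProductSpace ℝ E] {K L : Set E}

lemma notMem_interior_of_inner_eq_one {a p : E} (ha : ∀ x ∈ K, ⟪a, x⟫ ≤ 1) (hp : ⟪a, p⟫ = 1) :
    p ∉ interior K := by
  intro hpK
  have hmax : IsLocalMax (fun x => ⟪a, x⟫) p := by
    filter_upwards [mem_interior_iff_mem_nhds.1 hpK] with x hx
    simpa only [hp] using ha x hx
  have hzero : innerSL ℝ a = 0 := hmax.hasFDerivAt_eq_zero (innerSL ℝ a).hasFDerivAt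
  have : ⟪a, p⟫ = 0 := by simpa using congr($hzero p)
  linarith

lemma inner_le_of_forall_mem_interior (hK : Convex ℝ K) (hne : (interior K).Nonempty) {a : E}
    {r : ℝ} (ha : ∀ x ∈ interior K, ⟪a, x⟫ ≤ r) {x : E} (hx : x ∈ K) : ⟪a, x⟫ ≤ r := by
  have hclosed : IsClosed {y : E | ⟪a, y⟫ ≤ r} := isClosed_le (by fun_prop) continuous_const
  have hcl : x ∈ closure (interior K) := hK.closure_interior_eq_closure_of_nonempty_interior hne ▸
    subset_closure hx
  exact closure_minimal ha hclosed hcl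

lemma exists_normal_of_ray_disjoint_interior [CompleteSpace E] (hK : Convex ℝ K)
    (h0 : 0 ∈ interior K) {p v : E} (hp : p ∈ K) (hray : ∀ t : ℝ, 0 < t → p + t • v ∉ interior K) :
    ∃ a : E, (∀ x ∈ K, ⟪a, x⟫ ≤ 1) ∧ ⟪a, p⟫ = 1 ∧ 0 ≤ ⟪a, v⟫ := by
  have hdisj : Disjoint (interior K) (AffineMap.lineMap p (p + v) '' Ioi (0 : ℝ)) := by
    rw [disjoint_right]
    rintro _ ⟨t, ht, rfl⟩
    simpa [AffineMap.lineMap_apply, add_comm] using hray t ht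
  obtain ⟨f, u, hfK, hfray⟩ := geometric_hahn_banach_open hK.interior isOpen_interior
    ((convex_Ioi 0).affine_image _) hdisj
  have hu : 0 < u := by simpa using hfK 0 h0
  have hray_le : ∀ t : ℝ, 0 < t → u ≤ f p + t * f v := fun t ht => by
    simpa [AffineMap.lineMap_apply, add_comm] using hfray _ ⟨t, ht, rfl⟩
  have ha : ∀ x, ⟪u⁻¹ • (InnerProductSpace.toDual ℝ E).symm f, x⟫ = u⁻¹ * f x := fun x => by
    rw [real_inner_smul_left, InnerProductSpace.toDual_symm_apply]
  have hle : ∀ x ∈ K, u⁻¹ * f x ≤ 1 := fun x hx => by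
    rw [← ha]
    refine inner_le_of_forall_mem_interior hK ⟨0, h0⟩ (fun y hy => ?_) hx
    rw [ha, inv_mul_le_one₀ hu]
    exact (hfK y hy).le
  have hfp_le : f p ≤ u := (inv_mul_le_one₀ hu).1 (hle p hp)
  have hle_fp : u ≤ f p := by
    have hlim : Filter.Tendsto (fun t : ℝ => f p + t * f v) (nhdsWithin 0 (Ioi 0))
        (nhds (f p)) := by
      have hcont : Continuous fun t : ℝ => f p + t * f v := by fun_prop
      simpa using (hcont.tendsto 0).mono_left nhdsWithin_le_nhds
    exact ge_of_tendsto hlim (Filter.eventually_of_mem self_mem_nhdsWithin hray_le)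
  refine ⟨_, fun x hx => (ha x).trans_le (hle x hx), ?_, ?_⟩
  · rw [ha, hfp_le.antisymm hle_fp, inv_mul_cancel₀ hu.ne']
  · rw [ha]
    have := hray_le 1 one_pos
    have : 0 ≤ f v := by linarith
    positivity

lemma exists_normal_of_notMem_interior [CompleteSpace E] (hK : Convex ℝ K)
    (h0 : 0 ∈ interior K) {p : E} (hp : p ∈ K) (hpi : p ∉ interior K) :
    ∃ a : E, (∀ x ∈ K, ⟪a, x⟫ ≤ 1) ∧ ⟪a, p⟫ = 1 := by
  obtain ⟨a, ha, hap, -⟩ := exists_normal_of_ray_disjoint_interior (v := 0) hK h0 hp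
    (by simpa using fun t _ => hpi)
  exact ⟨a, ha, hap⟩

/-- The outer normals of `K`, scaled so that the supporting value is `1`, whose supporting
hyperplane meets `L`. For `L ⊆ K` they are the directions in which `L` cannot be moved inside
`K`. -/
def touchingNormals (K L : Set E) : Set E :=
  {a | (∀ x ∈ K, ⟪a, x⟫ ≤ 1) ∧ ∃ p ∈ L, ⟪a, p⟫ = 1}

lemma isCompact_touchingNormals [FiniteDimensional ℝ E] (h0 : 0 ∈ interior K)
    (hL : IsCompact L) : IsCompact (touchingNormals K L) := by
  obtain ⟨r, hr, hball⟩ := Metric.nhds_basis_closedBall.mem_iff.1 (mem_interior_iff_mem_nhds.1 h0)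
  have hnorm : ∀ a, (∀ x ∈ K, ⟪a, x⟫ ≤ 1) → ‖a‖ ≤ r⁻¹ := fun a ha => by
    rcases eq_or_ne a 0 with rfl | ha0
    · simpa using hr.le
    have hna := norm_pos_iff.2 ha0
    have hmem : (r / ‖a‖) • a ∈ K := hball (by
      rw [mem_closedBall_zero_iff, norm_smul, Real.norm_of_nonneg (by positivity),
        div_mul_cancel₀ _ hna.ne'])
    have hle := ha _ hmem
    rw [real_inner_smul_right, real_inner_self_eq_norm_mul_norm, ← mul_assoc,
      div_mul_cancel₀ _ hna.ne'] at hle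
    rwa [le_inv_comm₀ hna hr, ← one_div, le_div_iff₀ hna]
  have hclosed : IsClosed {q : E × E | (∀ x ∈ K, ⟪q.1, x⟫ ≤ 1) ∧ ⟪q.1, q.2⟫ = 1} := by
    simp only [ofPred_and, ofPred_forall]
    refine IsClosed.inter (isClosed_biInter fun x _ => isClosed_le (by fun_prop) continuous_const)
      (isClosed_eq (by fun_prop) continuous_const)
  have hcompact := ((isCompact_closedBall (0 : E) r⁻¹).prod hL).inter_right hclosed
  convert hcompact.image continuous_fst using 1
  ext a
  constructor
  · rintro ⟨ha, p, hp, hap⟩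
    exact ⟨(a, p), ⟨⟨mem_closedBall_zero_iff.2 (hnorm a ha), hp⟩, ha, hap⟩, rfl⟩
  · rintro ⟨⟨a, p⟩, ⟨⟨-, hp⟩, ha, hap⟩, rfl⟩
    exact ⟨ha, p, hp, hap⟩

/-- Uniformity in `p ∈ L` comes from compactness: by convexity a translation that moves `p ∈ K`
into the interior can be shortened, so the pointwise statement is stable near `p`. -/
lemma exists_translate_subset_interior [CompleteSpace E] (hK : Convex ℝ K) (h0 : 0 ∈ interior K)
    (hL : IsCompact L) (hLK : L ⊆ K) {v : E} (hv : ∀ a ∈ touchingNormals K L, ⟪a, v⟫ < 0) :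
    ∃ t : ℝ, ∀ p ∈ L, p + t • v ∈ interior K := by
  have hshort : ∀ p ∈ K, ∀ t₀ : ℝ, p + t₀ • v ∈ interior K → ∀ t ∈ Ioc 0 t₀,
      p + t • v ∈ interior K := fun p hp t₀ hpt₀ t ht => by
    have ht₀ : 0 < t₀ := ht.1.trans_le ht.2
    have hmem := hK.add_smul_mem_interior hp hpt₀ (t := t / t₀)
      ⟨div_pos ht.1 ht₀, (div_le_one ht₀).2 ht.2⟩
    rwa [smul_smul, div_mul_cancel₀ _ ht₀.ne'] at hmem
  have hev : ∀ᶠ t : ℝ in nhdsWithin 0 (Ioi 0), ∀ p ∈ L, p + t • v ∈ interior K := by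
    refine hL.induction_on (p := fun S => ∀ᶠ t : ℝ in nhdsWithin 0 (Ioi 0), ∀ p ∈ S,
      p + t • v ∈ interior K) (by simp) (fun S T hST h => h.mono fun t ht p hp => ht p (hST hp))
      (fun S T hS hT => ?_) fun p hp => ?_
    · filter_upwards [hS, hT] with t htS htT p hp
      exact hp.elim (htS p) (htT p)
    · obtain ⟨t₀, ht₀, hpt₀⟩ : ∃ t : ℝ, 0 < t ∧ p + t • v ∈ interior K := by
        by_contra! hray
        obtain ⟨a, ha, hap, hav⟩ := exists_normal_of_ray_disjoint_interior hK h0 (hLK hp) hray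
        exact (hv a ⟨ha, p, hp, hap⟩).not_ge hav
      have hnear : (fun q => q + t₀ • v) ⁻¹' interior K ∈ nhds p :=
        (isOpen_interior.preimage (by fun_prop)).mem_nhds hpt₀
      refine ⟨_, Filter.inter_mem (nhdsWithin_le_nhds hnear) self_mem_nhdsWithin, ?_⟩
      filter_upwards [Ioc_mem_nhdsGT ht₀] with t ht q hq
      exact hshort q (hLK hq.2) t₀ hq.1 t ht
  exact hev.exists

lemma zero_mem_convexHull_touchingNormals [FiniteDimensional ℝ E] (hK : Convex ℝ K)
    (h0 : 0 ∈ interior K) (hL : IsCompact L) (hLK : L ⊆ K)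
    (hopt : ∀ v : E, ∃ p ∈ L, p + v ∉ interior K) :
    0 ∈ convexHull ℝ (touchingNormals K L) := by
  by_contra hzero
  obtain ⟨f, u, hu, hf⟩ := geometric_hahn_banach_point_closed (convex_convexHull ℝ _)
    (isCompact_convexHull (isCompact_touchingNormals h0 hL)).isClosed hzero
  rw [map_zero] at hu
  obtain ⟨t, ht⟩ := exists_translate_subset_interior hK h0 hL hLK
    (v := -(InnerProductSpace.toDual ℝ E).symm f) fun a ha => by
      rw [inner_neg_right, real_inner_comm, InnerProductSpace.toDual_symm_apply]
      linarith [hf a (subset_convexHull ℝ _ ha)]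
  obtain ⟨p, hp, hpv⟩ := hopt (t • -(InnerProductSpace.toDual ℝ E).symm f)
  exact hpv (ht p hp)

/-- Moving the contact point from `α • u - γ • v` towards `(-s) • v` turns the normal
away from `u`. -/
lemma inner_le_inner_of_normals {a b u v : E} {s α γ κ η : ℝ} (hs : 0 < s) (hα : 0 < α)
    (hγ : 0 ≤ γ) (hκ : 0 ≤ κ) (hη : 0 < η)
    (hq : ⟪b, α • u - γ • v⟫ ≤ ⟪a, α • u - γ • v⟫)
    (hz : ⟪a, κ • (α • u - γ • v) + η • (-s) • v⟫ ≤ ⟪b, κ • (α • u - γ • v) + η • (-s) • v⟫) :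
    ⟪b, u⟫ ≤ ⟪a, u⟫ := by
  rw [inner_add_right, inner_add_right, real_inner_smul_right, real_inner_smul_right _ _ κ] at hz
  have hκq := mul_le_mul_of_nonneg_left hq hκ
  simp only [real_inner_smul_right, inner_sub_right] at hz hκq hq
  have hv : ⟪b, v⟫ ≤ ⟪a, v⟫ := le_of_mul_le_mul_left (by linarith) (mul_pos hη hs)
  exact le_of_mul_le_mul_left (by linarith [mul_le_mul_of_nonneg_left hv hγ]) hα

end Supporting

section Neg

variable {G : Type*} [TopologicalSpace G] [InvolutiveNeg G] [ContinuousNeg G] {K : Set G} {x : G}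

lemma mem_interior_neg_iff : x ∈ interior (-K) ↔ -x ∈ interior K :=
  Set.ext_iff.1 ((Homeomorph.neg G).preimage_interior K).symm x

lemma mem_frontier_neg_iff : x ∈ frontier (-K) ↔ -x ∈ frontier K :=
  Set.ext_iff.1 ((Homeomorph.neg G).preimage_frontier K).symm x

end Neg

lemma zero_mem_interior_inter_neg {G : Type*} [TopologicalSpace G] [SubtractionMonoid G]
    [ContinuousNeg G] {K : Set G} (h0 : 0 ∈ interior K) : 0 ∈ interior (K ∩ -K) := by
  rw [interior_inter]
  exact ⟨h0, mem_interior_neg_iff.2 (by rwa [neg_zero])⟩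

section Gauge

variable {E : Type*} [NormedAddCommGroup E] [NormedSpace ℝ E] {K : Set E}

lemma exists_lineMap_gauge_eq_gauge_neg (hK : Convex ℝ K) (h0 : 0 ∈ interior K) {x y : E}
    (hx : gauge K (-x) < gauge K x) (hy : gauge K y < gauge K (-y)) :
    ∃ t ∈ Ioo (0 : ℝ) 1,
      gauge K (AffineMap.lineMap x y t) = gauge K (-AffineMap.lineMap x y t) := by
  have hgauge : Continuous (gauge K) := continuous_gauge hK (mem_interior_iff_mem_nhds.1 h0)
  have hline : Continuous (AffineMap.lineMap x y : ℝ → E) := AffineMap.lineMap_continuous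
  have hcont : Continuous fun t : ℝ =>
      gauge K (AffineMap.lineMap x y t) - gauge K (-AffineMap.lineMap x y t) :=
    (hgauge.comp hline).sub (hgauge.comp hline.neg)
  obtain ⟨t, ht, hzero⟩ := intermediate_value_Ioo' zero_le_one hcont.continuousOn
    (show (0 : ℝ) ∈ Ioo _ _ by simpa using ⟨hy, hx⟩)
  exact ⟨t, ht, sub_eq_zero.1 hzero⟩

lemma inv_gauge_smul_mem_frontier (hK : Convex ℝ K) (h0 : 0 ∈ interior K)
    (hbdd : Bornology.IsBounded K) {x : E} (hx : x ≠ 0) :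
    0 < gauge K x ∧ (gauge K x)⁻¹ • x ∈ frontier K := by
  have hnhds := mem_interior_iff_mem_nhds.1 h0
  have hpos : 0 < gauge K x :=
    (gauge_pos (absorbent_nhds_zero hnhds) ((NormedSpace.isVonNBounded_iff ℝ).2 hbdd)).2 hx
  refine ⟨hpos, ?_⟩
  rw [← gauge_eq_one_iff_mem_frontier hK hnhds, gauge_smul_of_nonneg (inv_nonneg.2 hpos.le),
    smul_eq_mul, inv_mul_cancel₀ hpos.ne']

end Gauge

lemma range_fin_three_eq_insert {α : Type*} (f : Fin 3 → α) : range f = {f 0, f 1, f 2} := by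
  ext x
  simp [Fin.exists_fin_succ, eq_comm]

section SignPattern

lemma pos_of_nonneg_of_sum_mul_eq_zero {ι : Type*} [Fintype ι] {M : ι → ι → ℝ} {c : ι → ℝ}
    (hoff : ∀ i j, i ≠ j → M i j < 0) (hc : ∀ j, ∑ i, c i * M i j = 0) (hnonneg : ∀ i, 0 ≤ c i)
    (hne : c ≠ 0) (j : ι) : 0 < c j := by
  obtain ⟨i, hi⟩ := Function.ne_iff.1 hne
  refine (hnonneg j).lt_of_ne fun hj => ?_
  have hij : i ≠ j := fun hij => hi (hij ▸ hj.symm)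
  have hterm : ∀ k ∈ Finset.univ, c k * M k j ≤ 0 := fun k _ => by
    rcases eq_or_ne k j with rfl | hkj
    · simp [← hj]
    · exact mul_nonpos_of_nonneg_of_nonpos (hnonneg k) (hoff k j hkj).le
  have hstrict := mul_neg_of_pos_of_neg ((hnonneg i).lt_of_ne' hi) (hoff i j hij)
  exact (Finset.sum_neg' hterm ⟨i, Finset.mem_univ i, hstrict⟩).ne (hc j)

lemma exists_third_index {i j : Fin 3} (hij : i ≠ j) :
    ∃ k, i ≠ k ∧ j ≠ k ∧ Finset.univ = {i, j, k} := by
  decide +revert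

variable {M : Fin 3 → Fin 3 → ℝ} {c : Fin 3 → ℝ}

lemma eq_zero_or_pos_of_two_nonneg_of_sum_mul_eq_zero (hdiag : ∀ i, 0 < M i i)
    (hoff : ∀ i j, i ≠ j → M i j < 0) (hc : ∀ j, ∑ i, c i * M i j = 0) {i j : Fin 3} (hij : i ≠ j)
    (hi : 0 ≤ c i) (hj : 0 ≤ c j) : c = 0 ∨ ∀ k, 0 < c k := by
  obtain ⟨k, hik, hjk, huniv⟩ := exists_third_index hij
  have hcol := hc k
  rw [huniv, Finset.sum_insert (by simp [hij, hik]), Finset.sum_pair hjk] at hcol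
  have hk : 0 ≤ c k := by
    have := mul_nonpos_of_nonneg_of_nonpos hi (hoff i k hik).le
    have := mul_nonpos_of_nonneg_of_nonpos hj (hoff j k hjk).le
    exact nonneg_of_mul_nonneg_left (by linarith) (hdiag k)
  have hnonneg : ∀ m, 0 ≤ c m := fun m => by
    have hm : m ∈ ({i, j, k} : Finset (Fin 3)) := huniv ▸ Finset.mem_univ m
    simp only [Finset.mem_insert, Finset.mem_singleton] at hm
    rcases hm with rfl | rfl | rfl <;> assumption
  exact or_iff_not_imp_left.2 (pos_of_nonneg_of_sum_mul_eq_zero hoff hc hnonneg)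

lemma eq_zero_or_pos_or_neg_of_sum_mul_eq_zero (hdiag : ∀ i, 0 < M i i)
    (hoff : ∀ i j, i ≠ j → M i j < 0) (hc : ∀ j, ∑ i, c i * M i j = 0) :
    c = 0 ∨ (∀ i, 0 < c i) ∨ ∀ i, c i < 0 := by
  have hneg : ∀ j, ∑ i, (-c) i * M i j = 0 := fun j => by
    simpa only [Pi.neg_apply, neg_mul, Finset.sum_neg_distrib, neg_eq_zero] using hc j
  obtain ⟨i, j, hij, ⟨hi, hj⟩ | ⟨hi, hj⟩⟩ :
      ∃ i j : Fin 3, i ≠ j ∧ (0 ≤ c i ∧ 0 ≤ c j ∨ c i ≤ 0 ∧ c j ≤ 0) := by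
    rcases le_total 0 (c 0) with h0 | h0 <;> rcases le_total 0 (c 1) with h1 | h1 <;>
      rcases le_total 0 (c 2) with h2 | h2 <;>
      first
        | exact ⟨0, 1, by decide, by tauto⟩
        | exact ⟨0, 2, by decide, by tauto⟩
        | exact ⟨1, 2, by decide, by tauto⟩
  · exact (eq_zero_or_pos_of_two_nonneg_of_sum_mul_eq_zero hdiag hoff hc hij hi hj).imp_right Or.inl
  · rcases eq_zero_or_pos_of_two_nonneg_of_sum_mul_eq_zero hdiag hoff hneg hij (by simpa)
      (by simpa) with hzero | hpos
    · exact Or.inl (neg_eq_zero.1 hzero)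
    · exact Or.inr (Or.inr fun i => neg_pos.1 (hpos i))

end SignPattern

lemma one_lt_of_phiR_lt {s : ℝ} (hs : phiR < s) : 1 < s :=
  Real.one_lt_goldenRatio.trans hs

lemma add_one_lt_sq_of_phiR_lt {s : ℝ} (hs : phiR < s) : s + 1 < s ^ 2 := by
  have hlt : Real.goldenRatio < s := hs
  nlinarith [Real.goldenRatio_sq, Real.one_lt_goldenRatio]

lemma sum_mul_one_add_mul_inner_eq_one {E ι : Type*} [NormedAddCommGroup E]
    [InnerProductSpace ℝ E] [Fintype ι] {l : ι → E} {w : ι → ℝ} (hw : w ∈ stdSimplex ℝ ι)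
    (hzero : ∑ i, w i • l i = 0) (s : ℝ) (x : E) : ∑ j, w j * (1 + s * ⟪l j, x⟫) = 1 := by
  have hinner : ∑ j, w j * ⟪l j, x⟫ = 0 := by
    simpa only [sum_inner, real_inner_smul_left, inner_zero_left] using congr(⟪$hzero, x⟫)
  calc ∑ j, w j * (1 + s * ⟪l j, x⟫) = ∑ j, w j + s * ∑ j, w j * ⟪l j, x⟫ := by
        rw [Finset.mul_sum, ← Finset.sum_add_distrib]
        exact Finset.sum_congr rfl fun j _ => by ring
    _ = 1 := by rw [hinner, hw.2, mul_zero, add_zero]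

/-- The optimality certificate for the inclusion `-s⁻¹ • K ⊆ K`: the points `p i` lie in both
bodies and `l i` is the outer normal of `K` at `p i`, scaled to supporting value `1`. -/
structure TouchingConfig {E ι : Type*} [NormedAddCommGroup E] [InnerProductSpace ℝ E] (s : ℝ)
    (K : Set E) (p l : ι → E) : Prop where
  mem (i : ι) : p i ∈ K
  neg_smul_mem (i : ι) : (-s) • p i ∈ K
  inner_self (i : ι) : ⟪l i, p i⟫ = 1
  inner_le_one (i : ι) : ∀ x ∈ K, ⟪l i, x⟫ ≤ 1
  zero_mem_convexHull : 0 ∈ convexHull ℝ (range l)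

/-- The hull of `K ∩ -K` and the points `-s • p i`: the smallest convex subset of `K` that keeps
the symmetric core and the touching configuration of `K`. -/
def reducedBody {E ι : Type*} [AddCommGroup E] [Module ℝ E] (s : ℝ) (K : Set E) (p : ι → E) :
    Set E :=
  convexHull ℝ ((K ∩ -K) ∪ range fun i => (-s) • p i)

lemma inter_neg_subset_reducedBody {E ι : Type*} [AddCommGroup E] [Module ℝ E] (s : ℝ) (K : Set E)
    (p : ι → E) : K ∩ -K ⊆ reducedBody s K p :=
  subset_union_left.trans (subset_convexHull ℝ _)

lemma reducedBody_fin_three {E : Type*} [AddCommGroup E] [Module ℝ E] (s : ℝ) (K : Set E)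
    (p : Fin 3 → E) :
    reducedBody s K p = convexHull ℝ ((K ∩ -K) ∪ {-s • p 0, -s • p 1, -s • p 2}) := by
  rw [reducedBody, range_fin_three_eq_insert]

lemma isCompact_reducedBody {E ι : Type*} [NormedAddCommGroup E] [NormedSpace ℝ E]
    [FiniteDimensional ℝ E] [Finite ι] {K : Set E} (hK : IsCompact K) (s : ℝ) (p : ι → E) :
    IsCompact (reducedBody s K p) :=
  isCompact_convexHull ((hK.inter_right hK.isClosed.neg).union (finite_range _).isCompact)

lemma zero_mem_interior_reducedBody {E ι : Type*} [NormedAddCommGroup E] [NormedSpace ℝ E]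
    {K : Set E} (h0 : 0 ∈ interior K) (s : ℝ) (p : ι → E) :
    0 ∈ interior (reducedBody s K p) :=
  interior_mono (inter_neg_subset_reducedBody s K p) (zero_mem_interior_inter_neg h0)

namespace TouchingConfig

section AnyDimension

variable {E ι : Type*} [NormedAddCommGroup E] [InnerProductSpace ℝ E] {s : ℝ} {K : Set E}
  {p l : ι → E}

lemma notMem_interior (h : TouchingConfig s K p l) (i : ι) : p i ∉ interior K :=
  notMem_interior_of_inner_eq_one (h.inner_le_one i) (h.inner_self i)

lemma neg_one_le_mul_inner (h : TouchingConfig s K p l) {b : E} (hb : ∀ x ∈ K, ⟪b, x⟫ ≤ 1)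
    (i : ι) : -1 ≤ s * ⟪b, p i⟫ := by
  have hle := hb _ (h.neg_smul_mem i)
  rw [real_inner_smul_right] at hle
  linarith

lemma neg_one_le_inner (h : TouchingConfig s K p l) (hs : 1 ≤ s) {b : E}
    (hb : ∀ x ∈ K, ⟪b, x⟫ ≤ 1) (i : ι) : -1 ≤ ⟪b, p i⟫ := by
  have := h.neg_one_le_mul_inner hb i
  by_contra! hlt
  nlinarith

lemma gauge_neg_smul_lt (h : TouchingConfig s K p l) (hK : Convex ℝ K) (h0 : 0 ∈ interior K)
    (hs : 1 < s) (i : ι) : gauge K ((-s) • p i) < gauge K (-((-s) • p i)) := by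
  have hge : 1 ≤ gauge K (p i) := not_lt.1 fun hlt => h.notMem_interior i
    ((gauge_lt_one_iff_mem_interior hK (mem_interior_iff_mem_nhds.1 h0)).1 hlt)
  calc gauge K ((-s) • p i) ≤ 1 := gauge_le_one_of_mem (h.neg_smul_mem i)
    _ < s * gauge K (p i) := by nlinarith
    _ = gauge K (-((-s) • p i)) := by
      rw [neg_smul, neg_neg, gauge_smul_of_nonneg (by linarith), smul_eq_mul]

lemma le_of_sub_subset_smul_sub (h : TouchingConfig s K p l) {ρ : ℝ} (hρ : 0 < ρ) {c : E}
    (hsub : K - {c} ⊆ ρ • ({c} - K)) : s ≤ ρ := by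
  have hhalf : ∀ i, ⟪c, l i⟫ ≤ (ρ - s) / (1 + ρ) := fun i => by
    obtain ⟨_, ⟨c', rfl, x, hx, rfl⟩, heq⟩ := hsub (sub_mem_sub (h.neg_smul_mem i) rfl)
    have hinner := congr(⟪l i, $heq⟫)
    simp only [real_inner_smul_right, inner_sub_right, h.inner_self] at hinner
    have := mul_le_mul_of_nonneg_left (h.inner_le_one i x hx) hρ.le
    rw [real_inner_comm, le_div_iff₀ (by positivity)]
    linarith
  have hzero : ⟪c, (0 : E)⟫ ≤ (ρ - s) / (1 + ρ) :=
    convexHull_min (range_subset_iff.2 hhalf)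
      (convex_halfSpace_le (innerSL ℝ c).toLinearMap.isLinear _) h.zero_mem_convexHull
  rw [inner_zero_right, le_div_iff₀ (by positivity)] at hzero
  linarith

lemma left_coeff_pos (h : TouchingConfig s K p l) (hs : 1 < s) {i j : ι} {α γ : ℝ} {a : E}
    (hα : 0 ≤ α) (hγ : 0 ≤ γ) (hq : -(α • p i - γ • p j) ∈ K) (ha : ∀ v ∈ K, ⟪a, v⟫ ≤ 1)
    (haq : ⟪a, α • p i - γ • p j⟫ = 1) : 0 < α := by
  refine hα.lt_of_ne fun hzero => ?_
  subst hzero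
  have hγ1 : γ ≤ 1 := by
    simpa [real_inner_smul_right, h.inner_self] using h.inner_le_one j _ hq
  have haj : -(γ * ⟪a, p j⟫) = 1 := by simpa [real_inner_smul_right] using haq
  nlinarith [h.neg_one_le_mul_inner ha j]

variable [Fintype ι]

lemma mul_weight_add_weight_le_one (h : TouchingConfig s K p l) {w : ι → ℝ}
    (hw : w ∈ stdSimplex ℝ ι) (hzero : ∑ i, w i • l i = 0) {i j : ι} (hij : i ≠ j) :
    (1 + s) * w i + w j * (1 + s * ⟪l j, p i⟫) ≤ 1 := by
  classical
  have hterm : ∀ k, 0 ≤ w k * (1 + s * ⟪l k, p i⟫) := fun k =>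
    mul_nonneg (hw.1 k) (by linarith [h.neg_one_le_mul_inner (h.inner_le_one k) i])
  calc (1 + s) * w i + w j * (1 + s * ⟪l j, p i⟫)
      = ∑ k ∈ {i, j}, w k * (1 + s * ⟪l k, p i⟫) := by
        rw [Finset.sum_pair hij, h.inner_self]; ring
    _ ≤ ∑ k, w k * (1 + s * ⟪l k, p i⟫) :=
        Finset.sum_le_univ_sum_of_nonneg hterm
    _ = 1 := sum_mul_one_add_mul_inner_eq_one hw hzero s (p i)

end AnyDimension

section ThreePoints

variable {E : Type*} [NormedAddCommGroup E] [InnerProductSpace ℝ E] {s : ℝ} {K : Set E}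
  {p l : Fin 3 → E}

/-- The weights of the balanced normals are at most `1 / (1 + s)`, so each is large once
`s + 1 < s ^ 2`; a nonnegative off-diagonal entry would then overfill the `i`-th relation. -/
lemma inner_neg (h : TouchingConfig s K p l) (hs : phiR < s) {i j : Fin 3}
    (hij : i ≠ j) : ⟪l j, p i⟫ < 0 := by
  obtain ⟨w, hw, hzero⟩ := mem_convexHull_range_iff_exists_stdSimplex.1 h.zero_mem_convexHull
  obtain ⟨k, hik, hjk, huniv⟩ := exists_third_index hij
  have hsum : w i + w j + w k = 1 := by
    rw [← hw.2, huniv, Finset.sum_insert (by simp [hij, hik]), Finset.sum_pair hjk, add_assoc]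
  have hweight : ∀ m n, m ≠ n → (1 + s) * w m ≤ 1 := fun m n hmn => by
    have := h.mul_weight_add_weight_le_one hw hzero hmn
    have := mul_nonneg (hw.1 n)
      (by linarith [h.neg_one_le_mul_inner (h.inner_le_one n) m] : 0 ≤ 1 + s * ⟪l n, p m⟫)
    linarith
  have hs0 : 0 < s := one_pos.trans (one_lt_of_phiR_lt hs)
  by_contra! hnonneg
  have hover := h.mul_weight_add_weight_le_one hw hzero hij
  have := mul_nonneg (hw.1 j) (mul_nonneg hs0.le hnonneg)
  nlinarith [add_one_lt_sq_of_phiR_lt hs, hweight j i hij.symm, hweight k i hik.symm]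

lemma eq_zero_or_pos_or_neg_of_sum_smul_eq_zero (h : TouchingConfig s K p l) (hs : phiR < s)
    {c : Fin 3 → ℝ} (hc : ∑ i, c i • p i = 0) :
    c = 0 ∨ (∀ i, 0 < c i) ∨ ∀ i, c i < 0 := by
  refine eq_zero_or_pos_or_neg_of_sum_mul_eq_zero (M := fun i j => ⟪l j, p i⟫)
    (fun i => by simp [h.inner_self]) (fun i j hij => h.inner_neg hs hij) fun j => ?_
  simpa only [inner_sum, real_inner_smul_right, inner_zero_right] using congr(⟪l j, $hc⟫)

lemma affineIndependent (h : TouchingConfig s K p l) (hs : phiR < s) :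
    AffineIndependent ℝ p := by
  rw [affineIndependent_iff_of_fintype]
  intro c hsum hzero
  rw [Finset.weightedVSub_eq_linear_combination _ hsum] at hzero
  rw [Fin.sum_univ_three] at hsum
  rcases h.eq_zero_or_pos_or_neg_of_sum_smul_eq_zero hs hzero with rfl | hpos | hneg
  · exact fun i => rfl
  · linarith [hpos 0, hpos 1, hpos 2]
  · linarith [hneg 0, hneg 1, hneg 2]

lemma inner_left_mem_Icc (h : TouchingConfig s K p l) (hs : phiR < s) {i j : Fin 3} (hij : i ≠ j)
    {α γ : ℝ} (hα : 0 ≤ α) (hγ : 0 ≤ γ) (hz : α • p i - γ • p j ∈ K) :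
    ⟪l i, α • p i - γ • p j⟫ ∈ Icc 0 1 := by
  refine ⟨?_, h.inner_le_one i _ hz⟩
  have := mul_nonpos_of_nonneg_of_nonpos hγ (h.inner_neg hs hij.symm).le
  rw [inner_sub_right, real_inner_smul_right, real_inner_smul_right, h.inner_self]
  linarith

lemma inner_right_mem_Icc (h : TouchingConfig s K p l) (hs : phiR < s) {i j : Fin 3} (hij : i ≠ j)
    {α γ : ℝ} (hα : 0 ≤ α) (hγ : 0 ≤ γ) (hz : -(α • p i - γ • p j) ∈ K) :
    ⟪l j, α • p i - γ • p j⟫ ∈ Icc (-1) 0 := by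
  rw [neg_sub] at hz
  have hmem := h.inner_left_mem_Icc hs hij.symm hγ hα hz
  rw [← neg_sub (γ • p j), inner_neg_right]
  exact ⟨neg_le_neg hmem.2, neg_nonpos.2 hmem.1⟩

/-- If `x < 0`, then also `y < 0`, and both terms of the value of `b = x • l i + y • l j` at the
contact point are dominated by those of `-⟪b, p j⟫ ≤ 1 / s < 1`. -/
lemma normal_coeff_nonneg (h : TouchingConfig s K p l) (hs : phiR < s) {i j : Fin 3}
    (hij : i ≠ j) {α γ x y : ℝ} (hα : 0 ≤ α) (hγ : 0 ≤ γ)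
    (hz : α • p i - γ • p j ∈ K) (hz' : -(α • p i - γ • p j) ∈ K)
    (hb : ∀ v ∈ K, ⟪x • l i + y • l j, v⟫ ≤ 1)
    (hbz : ⟪x • l i + y • l j, α • p i - γ • p j⟫ = 1) : 0 ≤ x := by
  by_contra! hx
  have hs1 := one_lt_of_phiR_lt hs
  have hA := h.inner_left_mem_Icc hs hij hα hγ hz
  have hB := h.inner_right_mem_Icc hs hij hα hγ hz'
  have hbi := hb _ (h.mem i)
  have hbj := h.neg_one_le_mul_inner hb j
  have hij_neg := h.inner_neg hs hij.symm
  have hαγ : 1 ≤ α + γ := by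
    rw [inner_sub_right, real_inner_smul_right, real_inner_smul_right] at hbz
    nlinarith [h.neg_one_le_inner hs1.le hb j]
  have hleft : -⟪l i, p j⟫ ≤ ⟪l i, α • p i - γ • p j⟫ := by
    have := h.neg_one_le_inner hs1.le (h.inner_le_one i) j
    rw [inner_sub_right, real_inner_smul_right, real_inner_smul_right, h.inner_self]
    nlinarith
  have hy : y < 0 := by
    by_contra! hy
    rw [inner_add_left, real_inner_smul_left, real_inner_smul_left] at hbz
    linarith [mul_nonpos_of_nonpos_of_nonneg hx.le hA.1, mul_nonpos_of_nonneg_of_nonpos hy hB.2]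
  rw [inner_add_left, real_inner_smul_left, real_inner_smul_left] at hbz hbj
  rw [h.inner_self] at hbj
  have hxz : x * ⟪l i, α • p i - γ • p j⟫ ≤ -x * ⟪l i, p j⟫ := by nlinarith
  have hyz : y * ⟪l j, α • p i - γ • p j⟫ ≤ -y := by nlinarith [hB.1]
  nlinarith

lemma inner_right_le (h : TouchingConfig s K p l) (hs : phiR < s) {i j : Fin 3}
    (hij : i ≠ j) {α γ : ℝ} {b : E} (hα : 0 ≤ α) (hγ : 0 ≤ γ)
    (hz : α • p i - γ • p j ∈ K) (hb : ∀ v ∈ K, ⟪b, v⟫ ≤ 1)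
    (hbz : ⟪b, α • p i - γ • p j⟫ = 1) : ⟪b, p j⟫ ≤ max 0 ⟪b, p i⟫ := by
  have hα1 : α ≤ 1 := by
    have hle := h.inner_le_one i _ hz
    rw [inner_sub_right, real_inner_smul_right, real_inner_smul_right, h.inner_self] at hle
    nlinarith [h.inner_neg hs hij.symm]
  rcases le_or_gt ⟪b, p j⟫ 0 with hneg | hpos
  · exact le_max_of_le_left hneg
  · refine le_max_of_le_right ((hb _ (h.mem j)).trans ?_)
    rw [inner_sub_right, real_inner_smul_right, real_inner_smul_right] at hbz
    have hge : 1 ≤ α * ⟪b, p i⟫ := by linarith [mul_nonneg hγ hpos.le]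
    have hpi : 0 < ⟪b, p i⟫ := pos_of_mul_pos_right (one_pos.trans_le hge) hα
    nlinarith

lemma exists_segment_mem_frontier_inter_frontier_neg (h : TouchingConfig s K p l)
    (hs : phiR < s) (hK : Convex ℝ K) (hcomp : IsCompact K) (h0 : 0 ∈ interior K) {i j : Fin 3}
    (hij : i ≠ j) {α γ : ℝ} (hα : 0 ≤ α) (hγ : 0 ≤ γ)
    (hq : α • p i - γ • p j ∉ interior K) (hq' : -(α • p i - γ • p j) ∈ interior K) :
    ∃ κ η : ℝ, 0 < κ ∧ 0 < η ∧
      κ • (α • p i - γ • p j) + η • (-s) • p j ∈ frontier K ∩ frontier (-K) := by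
  have hnhds := mem_interior_iff_mem_nhds.1 h0
  have hleft : gauge K (-(α • p i - γ • p j)) < gauge K (α • p i - γ • p j) :=
    ((gauge_lt_one_iff_mem_interior hK hnhds).2 hq').trans_le
      (not_lt.1 fun hlt => hq ((gauge_lt_one_iff_mem_interior hK hnhds).1 hlt))
  obtain ⟨t, ⟨ht0, ht1⟩, hgauge⟩ := exists_lineMap_gauge_eq_gauge_neg hK h0 hleft
    (h.gauge_neg_smul_lt hK h0 (one_lt_of_phiR_lt hs) j)
  set X := AffineMap.lineMap (α • p i - γ • p j) ((-s) • p j) t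
  have hXeq : X = (1 - t) • (α • p i - γ • p j) + t • (-s) • p j :=
    AffineMap.lineMap_apply_module _ _ _
  have hX0 : X ≠ 0 := by
    intro hzero
    have hinner := congr(⟪l i, $hzero⟫)
    have hneg := h.inner_neg hs hij.symm
    simp only [hXeq, inner_add_right, inner_sub_right, real_inner_smul_right, h.inner_self,
      inner_zero_right] at hinner
    have hnonneg : 0 ≤ (1 - t) * (α * 1 - γ * ⟪l i, p j⟫) :=
      mul_nonneg (by linarith) (by nlinarith)
    have hpos : 0 < t * (-s * ⟪l i, p j⟫) := mul_pos ht0 (by nlinarith [one_lt_of_phiR_lt hs])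
    linarith
  obtain ⟨hg, hfr⟩ := inv_gauge_smul_mem_frontier hK h0 hcomp.isBounded hX0
  obtain ⟨-, hfr'⟩ := inv_gauge_smul_mem_frontier hK h0 hcomp.isBounded (neg_ne_zero.2 hX0)
  refine ⟨(gauge K X)⁻¹ * (1 - t), (gauge K X)⁻¹ * t, mul_pos (inv_pos.2 hg) (sub_pos.2 ht1),
    mul_pos (inv_pos.2 hg) ht0, ?_⟩
  rw [mul_smul, mul_smul, ← smul_add, ← hXeq]
  exact ⟨hfr, mem_frontier_neg_iff.2 (by rwa [← smul_neg, hgauge])⟩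

end ThreePoints

section Planar

variable {s : ℝ} {K : Set E2} {p l : Fin 3 → E2}

lemma exists_affineBasis (h : TouchingConfig s K p l) (hs : phiR < s) :
    ∃ B : AffineBasis (Fin 3) ℝ E2, ⇑B = p ∧ ∀ i, 0 < B.coord i 0 := by
  have hind := h.affineIndependent hs
  let B : AffineBasis (Fin 3) ℝ E2 :=
    ⟨p, hind, hind.affineSpan_eq_top_iff_card_eq_finrank_add_one.2 (by simp)⟩
  have hsum : ∑ i, B.coord i 0 = 1 := B.sum_coord_apply_eq_one 0
  rw [Fin.sum_univ_three] at hsum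
  refine ⟨B, rfl, ?_⟩
  rcases h.eq_zero_or_pos_or_neg_of_sum_smul_eq_zero hs
    (B.linear_combination_coord_eq_self 0) with hzero | hpos | hneg
  · simp only [funext_iff, Pi.zero_apply] at hzero
    linarith [hzero 0, hzero 1, hzero 2]
  · exact hpos
  · linarith [hneg 0, hneg 1, hneg 2]

lemma zero_mem_interior_convexHull (h : TouchingConfig s K p l) (hs : phiR < s) :
    0 ∈ interior (convexHull ℝ (range p)) := by
  obtain ⟨B, rfl, hpos⟩ := h.exists_affineBasis hs
  rwa [B.interior_convexHull]

/-- Subtracting the right multiple of the positive relation between the `p i` from any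
combination of them kills the middle coefficient. -/
lemma exists_eq_smul_sub_smul (h : TouchingConfig s K p l) (hs : phiR < s) (x : E2) :
    ∃ i j : Fin 3, i ≠ j ∧ ∃ α γ : ℝ, 0 ≤ α ∧ 0 ≤ γ ∧ x = α • p i - γ • p j := by
  obtain ⟨B, rfl, hpos⟩ := h.exists_affineBasis hs
  set ratio : Fin 3 → ℝ := fun i => B.coord i x / B.coord i 0
  let σ := Tuple.sort ratio
  have hmono : Monotone (ratio ∘ σ) := Tuple.monotone_sort ratio
  let c : Fin 3 → ℝ := fun i => B.coord i x - ratio (σ 1) * B.coord i 0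
  have hcoord : ∀ i, B.coord i x = ratio i * B.coord i 0 := fun i =>
    (div_mul_cancel₀ _ (hpos i).ne').symm
  have hlow : c (σ 0) ≤ 0 := by
    have : ratio (σ 0) ≤ ratio (σ 1) := hmono (by decide)
    have := mul_le_mul_of_nonneg_right this (hpos (σ 0)).le
    simp only [c, hcoord]
    linarith
  have hmid : c (σ 1) = 0 := by simp only [c, hcoord (σ 1), sub_self]
  have hhigh : 0 ≤ c (σ 2) := by
    have : ratio (σ 1) ≤ ratio (σ 2) := hmono (by decide)
    have := mul_le_mul_of_nonneg_right this (hpos (σ 2)).le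
    simp only [c, hcoord]
    linarith
  refine ⟨σ 2, σ 0, by simp, c (σ 2), -c (σ 0), hhigh, neg_nonneg.2 hlow, ?_⟩
  calc x = ∑ i, c i • B i := by
        simp only [c, sub_smul, mul_smul, Finset.sum_sub_distrib, ← Finset.smul_sum,
          B.linear_combination_coord_eq_self, smul_zero, sub_zero]
    _ = c (σ 0) • B (σ 0) + c (σ 1) • B (σ 1) + c (σ 2) • B (σ 2) := by
        rw [← Equiv.sum_comp σ, Fin.sum_univ_three]
    _ = c (σ 2) • B (σ 2) - -c (σ 0) • B (σ 0) := by rw [hmid]; module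

lemma exists_eq_smul_normal_add_smul_normal (h : TouchingConfig s K p l) (hs : phiR < s)
    {i j : Fin 3} (hij : i ≠ j) (b : E2) :
    ∃ x y : ℝ, b = x • l i + y • l j := by
  have hind : LinearIndependent ℝ ![l i, l j] := by
    rw [LinearIndependent.pair_iff]
    intro x y hxy
    have hi := congr(⟪$hxy, p i⟫)
    have hj := congr(⟪$hxy, p j⟫)
    simp only [inner_add_left, real_inner_smul_left, h.inner_self, inner_zero_left] at hi hj
    have hji := h.inner_neg hs hij
    have := h.inner_neg hs hij.symm
    have hji' := h.neg_one_le_mul_inner (h.inner_le_one j) i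
    have hij'' := h.neg_one_le_mul_inner (h.inner_le_one i) j
    have hs1 := one_lt_of_phiR_lt hs
    have hdet : 1 - ⟪l i, p j⟫ * ⟪l j, p i⟫ ≠ 0 := by nlinarith
    have hx : x * (1 - ⟪l i, p j⟫ * ⟪l j, p i⟫) = 0 := by linear_combination hi - ⟪l j, p i⟫ * hj
    have hy : y * (1 - ⟪l i, p j⟫ * ⟪l j, p i⟫) = 0 := by linear_combination hj - ⟪l i, p j⟫ * hi
    exact ⟨(mul_eq_zero.1 hx).resolve_right hdet, (mul_eq_zero.1 hy).resolve_right hdet⟩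
  have hspan := hind.span_eq_top_of_card_eq_finrank' (by simp)
  have hb : b ∈ Submodule.span ℝ {l i, l j} := by
    rw [← Matrix.range_cons_cons_empty, hspan]
    trivial
  obtain ⟨x, y, hxy⟩ := Submodule.mem_span_pair.1 hb
  exact ⟨x, y, hxy.symm⟩

/-- Otherwise `b = x • l i + y • l j` with `y < 0`, `s * x < -y ≤ 1 / s` and `1 ≤ x - y`, which
forces `s ^ 2 < s + 1`. -/
lemma inner_third_le (h : TouchingConfig s K p l) (hs : phiR < s) {i j m : Fin 3}
    (hij : i ≠ j) (hmi : m ≠ i) (hmj : m ≠ j) {α γ : ℝ} {b : E2} (hα : 0 ≤ α) (hγ : 0 ≤ γ)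
    (hz : α • p i - γ • p j ∈ K) (hz' : -(α • p i - γ • p j) ∈ K)
    (hb : ∀ v ∈ K, ⟪b, v⟫ ≤ 1) (hbz : ⟪b, α • p i - γ • p j⟫ = 1) :
    ⟪b, p m⟫ ≤ max 0 ⟪b, p i⟫ := by
  obtain ⟨x, y, rfl⟩ := h.exists_eq_smul_normal_add_smul_normal hs hij b
  have hx := h.normal_coeff_nonneg hs hij hα hγ hz hz' hb hbz
  have hs1 := one_lt_of_phiR_lt hs
  have hA := h.inner_left_mem_Icc hs hij hα hγ hz
  have hB := h.inner_right_mem_Icc hs hij hα hγ hz'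
  have hbj := h.neg_one_le_mul_inner hb j
  by_contra! hlt
  obtain ⟨hpos, hlt⟩ := max_lt_iff.1 hlt
  simp only [inner_add_left, real_inner_smul_left, h.inner_self] at hbz hbj hpos hlt
  have hxm := mul_nonpos_of_nonneg_of_nonpos hx (h.inner_neg hs hmi).le
  have hxj := mul_nonpos_of_nonneg_of_nonpos hx (h.inner_neg hs hij.symm).le
  have hy : y < 0 := by
    by_contra! hy
    linarith [mul_nonpos_of_nonneg_of_nonpos hy (h.inner_neg hs hmj).le]
  have hsum : 1 ≤ x - y := by nlinarith [hA.2, hB.1]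
  have hsy : -(s * y) ≤ 1 := by nlinarith
  have hsx : s * x < -y := by
    have hyi := mul_nonneg_of_nonpos_of_nonpos hy.le (h.inner_neg hs hij).le
    have := h.neg_one_le_mul_inner (h.inner_le_one j) m
    have : x < y * ⟪l j, p m⟫ := by linarith
    nlinarith
  nlinarith [add_one_lt_sq_of_phiR_lt hs]

lemma inner_le_max_inner (h : TouchingConfig s K p l) (hs : phiR < s) {i j : Fin 3}
    (hij : i ≠ j) {α γ : ℝ} {b : E2} (hα : 0 ≤ α) (hγ : 0 ≤ γ)
    (hz : α • p i - γ • p j ∈ K) (hz' : -(α • p i - γ • p j) ∈ K)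
    (hb : ∀ v ∈ K, ⟪b, v⟫ ≤ 1) (hbz : ⟪b, α • p i - γ • p j⟫ = 1) (m : Fin 3) :
    ⟪b, p m⟫ ≤ max 0 ⟪b, p i⟫ := by
  rcases eq_or_ne m i with rfl | hmi
  · exact le_max_right _ _
  rcases eq_or_ne m j with rfl | hmj
  · exact h.inner_right_le hs hij hα hγ hz hb hbz
  · exact h.inner_third_le hs hij hmi hmj hα hγ hz hz' hb hbz

/-- Opposite to `b` the symmetric core reaches at most `1`, so only the generators `-s • p m` can
exceed it, and among these `-s • p i` is extremal. -/
lemma neg_inner_le_max (h : TouchingConfig s K p l) (hs : phiR < s)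
    (hgen : K ⊆ reducedBody s K p) {i j : Fin 3}
    (hij : i ≠ j) {α γ : ℝ} {b : E2} (hα : 0 ≤ α) (hγ : 0 ≤ γ)
    (hz : α • p i - γ • p j ∈ K) (hz' : -(α • p i - γ • p j) ∈ K)
    (hb : ∀ v ∈ K, ⟪b, v⟫ ≤ 1) (hbz : ⟪b, α • p i - γ • p j⟫ = 1) :
    ∀ x ∈ K, -⟪b, x⟫ ≤ max 1 (s * ⟪b, p i⟫) := by
  have hs0 : 0 < s := one_pos.trans (one_lt_of_phiR_lt hs)
  have hconv : Convex ℝ {x : E2 | -⟪b, x⟫ ≤ max 1 (s * ⟪b, p i⟫)} :=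
    convex_halfSpace_le (-(innerSL ℝ b)).toLinearMap.isLinear _
  refine fun x hx => convexHull_min ?_ hconv (hgen hx)
  rintro v (⟨-, hv⟩ | ⟨m, rfl⟩)
  · have hle := hb (-v) hv
    rw [inner_neg_right] at hle
    exact hle.trans (le_max_left _ _)
  · calc -⟪b, (-s) • p m⟫ = s * ⟪b, p m⟫ := by rw [real_inner_smul_right]; ring
      _ ≤ s * max 0 ⟪b, p i⟫ :=
        mul_le_mul_of_nonneg_left (h.inner_le_max_inner hs hij hα hγ hz hz' hb hbz m) hs0.le
      _ = max 0 (s * ⟪b, p i⟫) := by rw [mul_max_of_nonneg _ _ hs0.le, mul_zero]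
      _ ≤ max 1 (s * ⟪b, p i⟫) := by gcongr; exact zero_le_one

lemma exists_common_boundary_normal (h : TouchingConfig s K p l) (hs : phiR < s)
    (hgen : K ⊆ reducedBody s K p) (hK : Convex ℝ K)
    (hcomp : IsCompact K) (h0 : 0 ∈ interior K) {q a : E2} {r : ℝ} (hq : -q ∈ interior K)
    (haq : ⟪a, q⟫ = 1) (ha : ∀ x ∈ K, ⟪a, x⟫ ≤ 1) (hr : 1 ≤ r) (har : ∀ x ∈ K, -⟪a, x⟫ ≤ r)
    (hqK : q ∈ K) :
    ∃ z ∈ frontier K ∩ frontier (-K),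
      ∃ b : E2, ⟪b, z⟫ = 1 ∧ (∀ x ∈ K, ⟪b, x⟫ ≤ 1) ∧ ∀ x ∈ K, -⟪b, x⟫ ≤ r := by
  have hs1 := one_lt_of_phiR_lt hs
  obtain ⟨i, j, hij, α, γ, hα, hγ, rfl⟩ := h.exists_eq_smul_sub_smul hs q
  have hα0 := h.left_coeff_pos hs1 hα hγ (interior_subset hq) ha haq
  obtain ⟨κ, η, hκ, hη, hz⟩ := h.exists_segment_mem_frontier_inter_frontier_neg hs hK hcomp h0 hij
    hα hγ (notMem_interior_of_inner_eq_one ha haq) hq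
  have hzK : κ • (α • p i - γ • p j) + η • (-s) • p j ∈ K := hcomp.isClosed.frontier_subset hz.1
  have hzK' : -(κ • (α • p i - γ • p j) + η • (-s) • p j) ∈ K :=
    hcomp.isClosed.frontier_subset (mem_frontier_neg_iff.1 hz.2)
  obtain ⟨b, hb, hbz⟩ := exists_normal_of_notMem_interior hK h0 hzK hz.1.2
  refine ⟨_, hz, b, hbz, hb, fun x hx => ?_⟩
  have hab : ⟪b, p i⟫ ≤ ⟪a, p i⟫ := inner_le_inner_of_normals (by linarith) hα0 hγ hκ.le hη
    (haq ▸ hb _ hqK) (hbz ▸ ha _ hzK)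
  have hai : s * ⟪a, p i⟫ ≤ r := by
    simpa [real_inner_smul_right] using har _ (h.neg_smul_mem i)
  have hsector : κ • (α • p i - γ • p j) + η • (-s) • p j =
      (κ * α) • p i - (κ * γ + η * s) • p j := by module
  rw [hsector] at hzK hzK' hbz
  calc -⟪b, x⟫ ≤ max 1 (s * ⟪b, p i⟫) := h.neg_inner_le_max hs hgen hij (by positivity)
        (by positivity) hzK hzK' hb hbz x hx
    _ ≤ r := max_le hr (hai.trans' (by gcongr))

end Planar

end TouchingConfig

section DiffBody

variable {E : Type*} [NormedAddCommGroup E] [NormedSpace ℝ E] {K : Set E}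

lemma mem_smul_iff_gauge_le (hK : Convex ℝ K) (hcl : IsClosed K) (h0 : 0 ∈ interior K) {ρ : ℝ}
    (hρ : 0 < ρ) {x : E} : x ∈ ρ • K ↔ gauge K x ≤ ρ := by
  rw [mem_smul_set_iff_inv_smul_mem₀ hρ.ne', ← hcl.closure_eq,
    ← gauge_le_one_iff_mem_closure hK (mem_interior_iff_mem_nhds.1 h0), hcl.closure_eq,
    gauge_smul_of_nonneg (inv_nonneg.2 hρ.le), smul_eq_mul, inv_mul_le_one₀ hρ]

lemma mem_smul_frontier_iff_gauge_eq (hK : Convex ℝ K) (h0 : 0 ∈ interior K) {ρ : ℝ} (hρ : 0 < ρ)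
    {x : E} : x ∈ ρ • frontier K ↔ gauge K x = ρ := by
  rw [mem_smul_set_iff_inv_smul_mem₀ hρ.ne',
    ← gauge_eq_one_iff_mem_frontier hK (mem_interior_iff_mem_nhds.1 h0),
    gauge_smul_of_nonneg (inv_nonneg.2 hρ.le), smul_eq_mul, inv_mul_eq_one₀ hρ.ne', eq_comm]

/-- The arithmetic mean `(K - K) / 2` of `K` and `-K`; `τ(K)` is the maximum of its gauge on
`K ∩ -K`. -/
def diffBody (K : Set E) : Set E := (2 : ℝ)⁻¹ • (K - K)

lemma half_smul_sub_mem_diffBody {x y : E} (hx : x ∈ K) (hy : y ∈ K) :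
    (2 : ℝ)⁻¹ • (x - y) ∈ diffBody K :=
  smul_mem_smul_set (sub_mem_sub hx hy)

lemma inter_neg_subset_diffBody : K ∩ -K ⊆ diffBody K := fun x hx => by
  convert half_smul_sub_mem_diffBody hx.1 hx.2 using 1
  module

lemma convex_diffBody (hK : Convex ℝ K) : Convex ℝ (diffBody K) :=
  (hK.sub hK).smul _

lemma isCompact_diffBody (hK : IsCompact K) : IsCompact (diffBody K) := by
  rw [diffBody, sub_eq_add_neg]
  exact (hK.add hK.neg).smul _

lemma neg_diffBody : -diffBody K = diffBody K := by
  rw [diffBody, ← smul_set_neg, neg_sub]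

lemma zero_mem_interior_diffBody (h0 : 0 ∈ interior K) : 0 ∈ interior (diffBody K) :=
  interior_mono inter_neg_subset_diffBody (zero_mem_interior_inter_neg h0)

lemma gauge_diffBody_neg (x : E) : gauge (diffBody K) (-x) = gauge (diffBody K) x := by
  rw [← gauge_neg_set_eq_gauge_neg, neg_diffBody]

lemma isGreatest_gauge_diffBody_csInf [Nontrivial E] (hK : Convex ℝ K) (hcomp : IsCompact K)
    (h0 : 0 ∈ interior K) :
    0 < sInf {ρ : ℝ | 0 < ρ ∧ K ∩ -K ⊆ ρ • diffBody K} ∧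
      IsGreatest (gauge (diffBody K) '' (K ∩ -K))
        (sInf {ρ : ℝ | 0 < ρ ∧ K ∩ -K ⊆ ρ • diffBody K}) := by
  have h0B := zero_mem_interior_diffBody h0
  have hcont : Continuous (gauge (diffBody K)) :=
    continuous_gauge (convex_diffBody hK) (mem_interior_iff_mem_nhds.1 h0B)
  have hcore := zero_mem_interior_inter_neg h0
  obtain ⟨M, hM⟩ := ((hcomp.inter_right hcomp.isClosed.neg).image hcont).exists_isGreatest
    ⟨_, mem_image_of_mem _ (interior_subset hcore)⟩
  have hMpos : 0 < M := by
    have := Module.punctured_nhds_neBot ℝ E 0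
    obtain ⟨x, hxcore, hx⟩ := Filter.nonempty_of_mem (Filter.inter_mem
      (nhdsWithin_le_nhds (s := {0}ᶜ) (mem_interior_iff_mem_nhds.1 hcore)) self_mem_nhdsWithin)
    exact (inv_gauge_smul_mem_frontier (convex_diffBody hK) h0B
      (isCompact_diffBody hcomp).isBounded hx).1.trans_le (hM.2 (mem_image_of_mem _ hxcore))
  have hset : {ρ : ℝ | 0 < ρ ∧ K ∩ -K ⊆ ρ • diffBody K} = Ici M := by
    ext ρ
    refine ⟨fun ⟨hρ, hsub⟩ => ?_, fun hρ => ⟨hMpos.trans_le hρ, fun x hx => ?_⟩⟩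
    · obtain ⟨x, hx, rfl⟩ := hM.1
      exact (mem_smul_iff_gauge_le (convex_diffBody hK) (isCompact_diffBody hcomp).isClosed h0B
        hρ).1 (hsub hx)
    · exact (mem_smul_iff_gauge_le (convex_diffBody hK) (isCompact_diffBody hcomp).isClosed h0B
        (hMpos.trans_le hρ)).2 ((hM.2 (mem_image_of_mem _ hx)).trans hρ)
  rw [hset, csInf_Ici]
  exact ⟨hMpos, hM⟩

end DiffBody

section DiffBodyNormals

variable {E : Type*} [NormedAddCommGroup E] [InnerProductSpace ℝ E] {K : Set E} {a q z : E}
  {M N r τ : ℝ}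

lemma inner_diffBody_le (hM : ∀ x ∈ K, ⟪a, x⟫ ≤ M) (hN : ∀ x ∈ K, -⟪a, x⟫ ≤ N) :
    ∀ y ∈ diffBody K, ⟪a, y⟫ ≤ 2⁻¹ * (M + N) := by
  rintro _ ⟨_, ⟨u, hu, v, hv, rfl⟩, rfl⟩
  simp only [real_inner_smul_right, inner_sub_right]
  linarith [hM u hu, hN v hv]

lemma inv_le_gauge_of_inner_le (h0 : 0 ∈ interior K) (hr : 0 < r) (haz : ⟪a, z⟫ = 1)
    (ha : ∀ y ∈ K, ⟪a, y⟫ ≤ r) : r⁻¹ ≤ gauge K z := by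
  by_contra! hlt
  obtain ⟨t, ht, htr, y, hy, rfl⟩ :=
    exists_lt_of_gauge_lt (absorbent_nhds_zero (mem_interior_iff_mem_nhds.1 h0)) hlt
  rw [real_inner_smul_right] at haz
  have htr' : t * r < 1 := (lt_div_iff₀ hr).1 (by rwa [one_div])
  linarith [mul_le_mul_of_nonneg_left (ha y hy) ht.le]

lemma exists_normal_of_gauge_eq [CompleteSpace E] (hK : Convex ℝ K) (hcl : IsClosed K)
    (h0 : 0 ∈ interior K) (hτ : 0 < τ) (hq : gauge K q = τ) :
    ∃ a : E, ⟪a, q⟫ = 1 ∧ ∀ y ∈ K, ⟪a, y⟫ ≤ τ⁻¹ := by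
  have hfr : τ⁻¹ • q ∈ frontier K := by
    rw [← mem_smul_set_iff_inv_smul_mem₀ hτ.ne', mem_smul_frontier_iff_gauge_eq hK h0 hτ, hq]
  obtain ⟨a, ha, haq⟩ := exists_normal_of_notMem_interior hK h0 (hcl.frontier_subset hfr) hfr.2
  rw [real_inner_smul_right] at haq
  refine ⟨τ⁻¹ • a, by rwa [real_inner_smul_left], fun y hy => ?_⟩
  rw [real_inner_smul_left]
  exact mul_le_of_le_one_right (inv_nonneg.2 hτ.le) (ha y hy)

/-- Near `q ∈ K` with `-q ∈ interior K` the bodies `K` and `K ∩ -K` coincide, so a local bound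
on `K ∩ -K` extends to `K` by convexity. -/
lemma inner_le_of_forall_mem_inter_neg (hK : Convex ℝ K) (hqK : q ∈ K) (hq : -q ∈ interior K)
    (ha : ∀ x ∈ K ∩ -K, ⟪a, x⟫ ≤ ⟪a, q⟫) : ∀ x ∈ K, ⟪a, x⟫ ≤ ⟪a, q⟫ := by
  refine IsMaxOn.of_isLocalMaxOn_of_concaveOn hqK ?_
    ((innerSL ℝ a).toLinearMap.concaveOn hK)
  have hnear : -K ∈ nhds q := mem_interior_iff_mem_nhds.1 (mem_interior_neg_iff.2 hq)
  filter_upwards [self_mem_nhdsWithin, nhdsWithin_le_nhds hnear] with x hx hx'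
  exact ha x ⟨hx, hx'⟩

end DiffBodyNormals

section Tau

variable {K : Set E2} {q : E2}

lemma tauB_pos (hK : Convex ℝ K) (hcomp : IsCompact K) (h0 : 0 ∈ interior K) : 0 < tauB K :=
  (isGreatest_gauge_diffBody_csInf hK hcomp h0).1

lemma isGreatest_tauB (hK : Convex ℝ K) (hcomp : IsCompact K) (h0 : 0 ∈ interior K) :
    IsGreatest (gauge (diffBody K) '' (K ∩ -K)) (tauB K) :=
  (isGreatest_gauge_diffBody_csInf hK hcomp h0).2

lemma tauB_le_one : tauB K ≤ 1 :=
  csInf_le ⟨0, fun _ hρ => hρ.1.le⟩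
    ⟨one_pos, (inter_neg_subset_diffBody (K := K)).trans (one_smul ℝ _).ge⟩

lemma tauB_le_tauB {L : Set E2} (hL : L ⊆ K) (hcore : K ∩ -K ⊆ L ∩ -L) : tauB K ≤ tauB L :=
  csInf_le_csInf ⟨0, fun _ hρ => hρ.1.le⟩
    ⟨1, one_pos, (inter_neg_subset_diffBody (K := L)).trans (one_smul ℝ _).ge⟩
    fun _ hρ => ⟨hρ.1, hcore.trans <| hρ.2.trans <|
      smul_set_mono <| smul_set_mono <| sub_subset_sub hL hL⟩

namespace TouchingConfig

variable {s : ℝ} {p l : Fin 3 → E2}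

/-- A supporting line of `(K - K) / 2` at the maximizer `q` bounds `K` by `1` in its direction
and by `2 / τ - 1` in the opposite one; rotating it to a common boundary point keeps both
bounds. -/
lemma exists_gauge_eq_tauB_of_neg_mem_interior (h : TouchingConfig s K p l) (hs : phiR < s)
    (hgen : K ⊆ reducedBody s K p)
    (hK : Convex ℝ K) (hcomp : IsCompact K) (h0 : 0 ∈ interior K) (hqK : q ∈ K)
    (hq : -q ∈ interior K) (hgauge : gauge (diffBody K) q = tauB K) :
    ∃ z ∈ frontier K ∩ frontier (-K), gauge (diffBody K) z = tauB K := by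
  have hτ := tauB_pos hK hcomp h0
  have h0B := zero_mem_interior_diffBody h0
  have hmax := (isGreatest_tauB hK hcomp h0).2
  obtain ⟨a, haq, haB⟩ := exists_normal_of_gauge_eq (convex_diffBody hK)
    (isCompact_diffBody hcomp).isClosed h0B hτ hgauge
  have ha : ∀ x ∈ K, ⟪a, x⟫ ≤ 1 := by
    rw [← haq]
    refine inner_le_of_forall_mem_inter_neg hK hqK hq fun x hx => ?_
    obtain ⟨y, hy, rfl⟩ := (mem_smul_iff_gauge_le (convex_diffBody hK)
      (isCompact_diffBody hcomp).isClosed h0B hτ).2 (hmax (mem_image_of_mem _ hx))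
    rw [haq, real_inner_smul_right]
    calc tauB K * ⟪a, y⟫ ≤ tauB K * (tauB K)⁻¹ := mul_le_mul_of_nonneg_left (haB y hy) hτ.le
      _ = 1 := mul_inv_cancel₀ hτ.ne'
  have har : ∀ x ∈ K, -⟪a, x⟫ ≤ 2 * (tauB K)⁻¹ - 1 := fun x hx => by
    have := haB _ (half_smul_sub_mem_diffBody hqK hx)
    rw [real_inner_smul_right, inner_sub_right, haq] at this
    linarith
  have hinv : 1 ≤ (tauB K)⁻¹ := (one_le_inv₀ hτ).2 tauB_le_one
  obtain ⟨z, hz, b, hbz, hb, hbr⟩ := h.exists_common_boundary_normal hs hgen hK hcomp h0 hq haq ha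
    (by linarith : 1 ≤ 2 * (tauB K)⁻¹ - 1) har hqK
  have hzcore : z ∈ K ∩ -K :=
    ⟨hcomp.isClosed.frontier_subset hz.1, hcomp.isClosed.neg.frontier_subset hz.2⟩
  refine ⟨z, hz, (hmax (mem_image_of_mem _ hzcore)).antisymm ?_⟩
  have hbB : ∀ y ∈ diffBody K, ⟪b, y⟫ ≤ (tauB K)⁻¹ := fun y hy => by
    linarith [inner_diffBody_le hb hbr y hy]
  simpa only [inv_inv] using inv_le_gauge_of_inner_le h0B (inv_pos.2 hτ) hbz hbB

lemma exists_gauge_eq_tauB (h : TouchingConfig s K p l) (hs : phiR < s)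
    (hgen : K ⊆ reducedBody s K p)
    (hK : Convex ℝ K) (hcomp : IsCompact K) (h0 : 0 ∈ interior K) :
    ∃ z ∈ frontier K ∩ frontier (-K), gauge (diffBody K) z = tauB K := by
  obtain ⟨q, ⟨hqK, hq⟩, hgauge⟩ := (isGreatest_tauB hK hcomp h0).1
  by_cases hneg : -q ∈ interior K
  · exact h.exists_gauge_eq_tauB_of_neg_mem_interior hs hgen hK hcomp h0 hqK hneg hgauge
  by_cases hpos : q ∈ interior K
  · exact h.exists_gauge_eq_tauB_of_neg_mem_interior hs hgen hK hcomp h0 hq (by rwa [neg_neg])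
      ((gauge_diffBody_neg q).trans hgauge)
  · rw [hcomp.isClosed.frontier_eq, hcomp.isClosed.neg.frontier_eq]
    exact ⟨q, ⟨⟨hqK, hpos⟩, hq, mem_interior_neg_iff.not.2 hneg⟩, hgauge⟩

lemma exists_mem_tauB_smul_frontier (h : TouchingConfig s K p l) (hs : phiR < s)
    (hgen : K ⊆ reducedBody s K p)
    (hK : Convex ℝ K) (hcomp : IsCompact K) (h0 : 0 ∈ interior K) :
    ∃ z ∈ frontier (K ∩ -K), z ∈ tauB K • frontier (diffBody K) ∧
      z ∈ frontier K ∩ frontier (-K) := by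
  obtain ⟨z, hz, hgauge⟩ := h.exists_gauge_eq_tauB hs hgen hK hcomp h0
  refine ⟨z, ?_, (mem_smul_frontier_iff_gauge_eq (convex_diffBody hK)
    (zero_mem_interior_diffBody h0) (tauB_pos hK hcomp h0)).2 hgauge, hz⟩
  rw [(hcomp.isClosed.inter hcomp.isClosed.neg).frontier_eq]
  exact ⟨⟨hcomp.isClosed.frontier_subset hz.1, hcomp.isClosed.neg.frontier_subset hz.2⟩,
    fun hint => hz.1.2 (interior_mono inter_subset_left hint)⟩

end TouchingConfig

end Tau

section Centering

variable {E : Type*} [NormedAddCommGroup E] [NormedSpace ℝ E] {K L : Set E} {s : ℝ}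

lemma neg_inv_smul_subset_iff (hs : 0 < s) : (-s⁻¹) • K ⊆ K ↔ K ⊆ s • -K := by
  rw [subset_smul_set_iff₀ hs.ne', neg_smul_set, neg_subset]

lemma zero_mem_interior_of_subset_smul_neg (hK : Convex ℝ K) (hne : (interior K).Nonempty)
    (hs : 0 < s) (hsub : K ⊆ s • -K) : 0 ∈ interior K := by
  obtain ⟨x, hx⟩ := hne
  have hxK : (-s⁻¹) • x ∈ K :=
    (neg_inv_smul_subset_iff hs).2 hsub (smul_mem_smul_set (interior_subset hx))
  convert hK.combo_interior_self_mem_interior hx hxK (a := (1 + s)⁻¹) (b := s / (1 + s))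
    (by positivity) (by positivity) (by field_simp) using 1
  rw [smul_smul, ← add_smul]
  have : (1 + s)⁻¹ + s / (1 + s) * -s⁻¹ = 0 := by field_simp; ring
  rw [this, zero_smul]

lemma exists_one_lt_smul_mem_interior (hL : IsCompact L) (hLK : L ⊆ interior K) :
    ∃ t : ℝ, 1 < t ∧ ∀ x ∈ L, t • x ∈ interior K := by
  have hev : ∀ᶠ t : ℝ in nhds 1, ∀ x ∈ L, t • x ∈ interior K := by
    refine hL.eventually_forall_of_forall_eventually fun x hx => ?_
    have hcont : Continuous fun q : ℝ × E => q.1 • q.2 := by fun_prop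
    exact hcont.continuousAt.eventually_mem
      (isOpen_interior.mem_nhds (by simpa using hLK hx))
  obtain ⟨t, ht, ht1⟩ :=
    ((hev.filter_mono nhdsWithin_le_nhds).and (self_mem_nhdsWithin (s := Ioi (1 : ℝ)))).exists
  exact ⟨t, ht1, ht⟩

/-- The homothety `x ↦ t • (-s⁻¹ • x + v)` has ratio `-t / s` and still maps `K` into itself for
some `t > 1`; its fixed point is the new center `c`. -/
lemma exists_sub_subset_smul_sub_of_translate_subset_interior (hcomp : IsCompact K) (hs : 0 < s)
    {v : E} (hv : ∀ x ∈ (-s⁻¹) • K, x + v ∈ interior K) :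
    ∃ ρ, 0 < ρ ∧ ρ < s ∧ ∃ c : E, K - {c} ⊆ ρ • ({c} - K) := by
  obtain ⟨t, ht, htK⟩ := exists_one_lt_smul_mem_interior
    (((hcomp.smul (-s⁻¹)).image (continuous_id.add continuous_const)))
    (image_subset_iff.2 hv)
  have : 0 < t := one_pos.trans ht
  refine ⟨s / t, by positivity, div_lt_self hs ht, (s / (1 + s / t)) • v, ?_⟩
  rintro _ ⟨x, hx, c, rfl, rfl⟩
  have hmem : t • ((-s⁻¹) • x + v) ∈ K :=
    interior_subset (htK _ (mem_image_of_mem _ (smul_mem_smul_set hx)))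
  refine ⟨_, sub_mem_sub rfl hmem, ?_⟩
  match_scalars
  · field_simp
    ring
  · field_simp

end Centering

section MinkAsym

variable {K : Set E2}

lemma minkAsym_le {ρ : ℝ} (hρ : 0 < ρ) {c : E2} (hsub : K - {c} ⊆ ρ • ({c} - K)) :
    minkAsym K ≤ ρ :=
  csInf_le ⟨0, fun _ h => h.1.le⟩ ⟨hρ, c, hsub⟩

lemma exists_touchingConfig_minkAsym (hK : Convex ℝ K) (hcomp : IsCompact K)
    (h0 : 0 ∈ interior K) (hpos : 0 < minkAsym K) (hc : MinkCentered K) :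
    ∃ p l : Fin 3 → E2, TouchingConfig (minkAsym K) K p l := by
  have hopt : ∀ v : E2, ∃ p ∈ (-(minkAsym K)⁻¹) • K, p + v ∉ interior K := by
    by_contra! hmove
    obtain ⟨v, hv⟩ := hmove
    obtain ⟨ρ, hρ, hlt, c, hsub⟩ :=
      exists_sub_subset_smul_sub_of_translate_subset_interior hcomp hpos hv
    exact (minkAsym_le hρ hsub).not_gt hlt
  have hzero := zero_mem_convexHull_touchingNormals hK h0 (hcomp.smul _)
    ((neg_inv_smul_subset_iff hpos).2 hc) hopt
  obtain ⟨l, hl, hl0⟩ :=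
    exists_mem_convexHull_range_of_finrank_lt_card (ι := Fin 3) (by simp) hzero
  choose hle p hp hinner using hl
  refine ⟨p, l, ⟨fun i => (neg_inv_smul_subset_iff hpos).2 hc (hp i), fun i => ?_, hinner, hle,
    hl0⟩⟩
  have := (mem_smul_set_iff_inv_smul_mem₀ (neg_ne_zero.2 (inv_ne_zero hpos.ne')) _ _).1 (hp i)
  rwa [inv_neg, inv_inv] at this

namespace TouchingConfig

variable {s : ℝ}

lemma minkAsym_eq {ι : Type*} {p l : ι → E2} (h : TouchingConfig s K p l) (hs : 0 < s)
    (hsub : K ⊆ s • -K) : minkAsym K = s := by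
  have hcentered : K - {0} ⊆ s • ({0} - K) := by simpa using hsub
  exact (minkAsym_le hs hcentered).antisymm
    (le_csInf ⟨s, hs, 0, hcentered⟩ fun ρ ⟨hρ, c, hc⟩ => h.le_of_sub_subset_smul_sub hρ hc)

lemma isAsymPoint {ι : Type*} {p l : ι → E2} (h : TouchingConfig (minkAsym K) K p l)
    (hcomp : IsCompact K) (hpos : 0 < minkAsym K) (hc : MinkCentered K) (i : ι) :
    IsAsymPoint K (p i) := by
  have hsub := (neg_inv_smul_subset_iff hpos).2 hc
  have hmem : p i ∈ (-(minkAsym K)⁻¹) • K := by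
    rw [mem_smul_set_iff_inv_smul_mem₀ (neg_ne_zero.2 (inv_ne_zero hpos.ne')), inv_neg, inv_inv]
    exact h.neg_smul_mem i
  rw [IsAsymPoint, hcomp.isClosed.frontier_eq, (hcomp.smul _).isClosed.frontier_eq]
  exact ⟨⟨h.mem i, h.notMem_interior i⟩, hmem, fun hint =>
    h.notMem_interior i (interior_mono hsub hint)⟩

lemma wellSpread {p l : Fin 3 → E2} (h : TouchingConfig (minkAsym K) K p l) (hcomp : IsCompact K)
    (hs : phiR < minkAsym K) (hc : MinkCentered K) : WellSpread K (p 0) (p 1) (p 2) := by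
  have hpos : 0 < minkAsym K := one_pos.trans (one_lt_of_phiR_lt hs)
  have hasym := h.isAsymPoint hcomp hpos hc
  have hne : ∀ i, l i ≠ 0 := fun i hi => by
    simpa only [hi, inner_zero_left, zero_ne_one] using h.inner_self i
  have hle : ∀ i, ∀ x ∈ K, ⟪l i, x⟫ ≤ ⟪l i, p i⟫ := fun i x hx =>
    (h.inner_le_one i x hx).trans_eq (h.inner_self i).symm
  refine ⟨hasym 0, hasym 1, hasym 2, l 0, l 1, l 2, hne 0, hne 1, hne 2, hle 0, hle 1, hle 2,
    ?_, ?_⟩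
  · rw [← range_fin_three_eq_insert]
    exact h.zero_mem_interior_convexHull hs
  · rw [← range_fin_three_eq_insert]
    exact h.zero_mem_convexHull

end TouchingConfig

end MinkAsym

namespace TouchingConfig

section ReducedBody

variable {E ι : Type*} [NormedAddCommGroup E] [InnerProductSpace ℝ E] {s : ℝ} {K : Set E}
  {p l : ι → E}

lemma reducedBody_subset (h : TouchingConfig s K p l) (hK : Convex ℝ K) : reducedBody s K p ⊆ K :=
  convexHull_min (union_subset inter_subset_left (range_subset_iff.2 h.neg_smul_mem)) hK

lemma reducedBody_inter_neg (h : TouchingConfig s K p l) (hK : Convex ℝ K) :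
    reducedBody s K p ∩ -reducedBody s K p = K ∩ -K := by
  have hsub := h.reducedBody_subset hK
  have hcore := inter_neg_subset_reducedBody s K p
  refine Subset.antisymm (inter_subset_inter hsub (neg_subset_neg.2 hsub)) fun x hx =>
    ⟨hcore hx, hcore ⟨hx.2, by simpa using hx.1⟩⟩

lemma reducedBody_reducedBody (h : TouchingConfig s K p l) (hK : Convex ℝ K) :
    reducedBody s (reducedBody s K p) p = reducedBody s K p :=
  congrArg (fun C => convexHull ℝ (C ∪ range fun i => (-s) • p i)) (h.reducedBody_inter_neg hK)

lemma mem_inter_neg (h : TouchingConfig s K p l) (hK : Convex ℝ K) (h0 : 0 ∈ K) (hs : 1 ≤ s)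
    (i : ι) : p i ∈ K ∩ -K := by
  refine ⟨h.mem i, mem_neg.2 ?_⟩
  have hs0 : 0 < s := one_pos.trans_le hs
  have hmem := hK.smul_mem_of_zero_mem h0 (h.neg_smul_mem i)
    ⟨inv_nonneg.2 hs0.le, inv_le_one_of_one_le₀ hs⟩
  rwa [smul_smul, mul_neg, inv_mul_cancel₀ hs0.ne', neg_one_smul] at hmem

lemma toReducedBody (h : TouchingConfig s K p l) (hK : Convex ℝ K) (h0 : 0 ∈ K) (hs : 1 ≤ s) :
    TouchingConfig s (reducedBody s K p) p l where
  mem i := inter_neg_subset_reducedBody s K p (h.mem_inter_neg hK h0 hs i)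
  neg_smul_mem i := subset_convexHull ℝ _ (Or.inr (mem_range_self i))
  inner_self := h.inner_self
  inner_le_one i x hx := h.inner_le_one i x (h.reducedBody_subset hK hx)
  zero_mem_convexHull := h.zero_mem_convexHull

lemma reducedBody_subset_smul_neg (h : TouchingConfig s K p l) (hK : Convex ℝ K) (h0 : 0 ∈ K)
    (hs : 1 ≤ s) : reducedBody s K p ⊆ s • -reducedBody s K p := by
  have hcore : ∀ x ∈ K ∩ -K, -x ∈ reducedBody s K p := fun x hx =>
    inter_neg_subset_reducedBody s K p ⟨hx.2, by simpa using hx.1⟩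
  have h0' : 0 ∈ reducedBody s K p :=
    inter_neg_subset_reducedBody s K p ⟨h0, by simpa using h0⟩
  have hs0 : 0 < s := one_pos.trans_le hs
  refine convexHull_min (union_subset (fun x hx => ?_) (range_subset_iff.2 fun i => ?_))
    ((convex_convexHull ℝ _).neg.smul s)
  · rw [mem_smul_set_iff_inv_smul_mem₀ hs0.ne', mem_neg, ← smul_neg]
    exact (convex_convexHull ℝ _).smul_mem_of_zero_mem h0' (hcore x hx)
      ⟨inv_nonneg.2 hs0.le, inv_le_one_of_one_le₀ hs⟩
  · rw [neg_smul, ← smul_neg]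
    exact smul_mem_smul_set (by simpa using (h.toReducedBody hK h0 hs).mem i)

end ReducedBody

end TouchingConfig

theorem stmt9 (K : Set E2) (hK : IsConvexBody K) (hc : MinkCentered K)
    (hs : phiR < minkAsym K) :
    ∃ p1 p2 p3 : E2, WellSpread K p1 p2 p3 ∧
      (let s := minkAsym K
       let K' := convexHull ℝ ((K ∩ (-K)) ∪ {-s • p1, -s • p2, -s • p3})
       MinkCentered K' ∧
       minkAsym K' = minkAsym K ∧
       tauB K' ≥ tauB K ∧
       ∃ p : E2, p ∈ frontier (K' ∩ (-K')) ∧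
         p ∈ tauB K' • frontier ((2:ℝ)⁻¹ • (K' - K')) ∧
         p ∈ frontier K' ∩ frontier (-K')) := by
  obtain ⟨hconv, hcomp, hne⟩ := hK
  have hs1 : 1 < minkAsym K := one_lt_of_phiR_lt hs
  have hpos : 0 < minkAsym K := one_pos.trans hs1
  have h0 : 0 ∈ interior K := zero_mem_interior_of_subset_smul_neg hconv hne hpos hc
  obtain ⟨p, l, h⟩ := exists_touchingConfig_minkAsym hconv hcomp h0 hpos hc
  have h' := h.toReducedBody hconv (interior_subset h0) hs1.le
  have hsub := h.reducedBody_subset_smul_neg hconv (interior_subset h0) hs1.le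
  have hasym := h'.minkAsym_eq hpos hsub
  refine ⟨p 0, p 1, p 2, h.wellSpread hcomp hs hc, ?_⟩
  simp only [← reducedBody_fin_three]
  refine ⟨?_, hasym,
    tauB_le_tauB (h.reducedBody_subset hconv) (h.reducedBody_inter_neg hconv).ge,
    h'.exists_mem_tauB_smul_frontier hs (h.reducedBody_reducedBody hconv).ge
      (convex_convexHull ℝ _) (isCompact_reducedBody hcomp _ p)
      (zero_mem_interior_reducedBody h0 _ p)⟩
  rwa [MinkCentered, hasym]
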